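/- Every antisymmetric 2-tensor ω on ℝ^7 decomposes uniquely as ω_{bc} = α^{a} φ_{abc} + ω'_{bc}, where α ∈ ℝ^7 and ω' is an antisymmetric 2-tensor satisfying ω'_{ab} φ^{ab}{}_{c} = 0 for all c. Consequently Λ²(ℝ^7) = Λ²₇ ⊕ Λ²₁₄, where Λ²₇ = {α ⌟ φ : α ∈ ℝ^7} has dimension 7 and Λ²₁₄ = {ω : ω_{ab} φ^{ab}{}_{c} = 0 for all c} has dimension 14. -/

import Mathlib

open scoped BigOperators

/-- Components of the standard G₂ 3-form `φ` on the seven ordered (0-indexed) index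
triples corresponding to `φ₁₂₃ = φ₁₄₅ = φ₁₆₇ = φ₂₄₆ = 1`, `φ₂₅₇ = φ₃₄₇ = φ₃₅₆ = -1`. -/
def phi0 : ℕ → ℕ → ℕ → ℝ
  | 0, 1, 2 => 1
  | 0, 3, 4 => 1
  | 0, 5, 6 => 1
  | 1, 3, 5 => 1
  | 1, 4, 6 => -1
  | 2, 3, 6 => -1
  | 2, 4, 5 => -1
  | _, _, _ => 0

/-- The standard G₂ 3-form `φ` on `ℝ⁷`, as a totally antisymmetric 3-tensor. -/
def phi (a b c : Fin 7) : ℝ :=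
  phi0 a.val b.val c.val - phi0 a.val c.val b.val + phi0 b.val c.val a.val
    - phi0 b.val a.val c.val + phi0 c.val a.val b.val - phi0 c.val b.val a.val

/-- The Levi-Civita symbol on seven indices, with `ε 1234567 = 1`. -/
noncomputable def eps (v : Fin 7 → Fin 7) : ℝ :=
  if h : Function.Bijective v then ((Equiv.Perm.sign (Equiv.ofBijective v h) : ℤ) : ℝ) else 0

/-- The 4-form `ψ = ⋆φ`, `ψ_{abcd} = (1/6) ε_{abcdmnp} φ^{mnp}`. -/
noncomputable def psi (a b c d : Fin 7) : ℝ :=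
  (1 / 6 : ℝ) * ∑ m : Fin 7, ∑ n : Fin 7, ∑ p : Fin 7,
    eps ![a, b, c, d, m, n, p] * phi m n p

/-- The Euclidean metric `g_{ab} = δ_{ab}` on `ℝ⁷`. -/
def gE (a b : Fin 7) : ℝ := if a = b then 1 else 0

/-- The space `Λ²(ℝ⁷)` of antisymmetric 2-tensors on `ℝ⁷`. -/
def Lam2 : Submodule ℝ (Matrix (Fin 7) (Fin 7) ℝ) where
  carrier := {ω | ∀ a b, ω b a = -ω a b}
  add_mem' := by
    intro x y hx hy a b
    simp only [Matrix.add_apply, hx a b, hy a b]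
    ring
  zero_mem' := by
    intro a b
    simp
  smul_mem' := by
    intro r x hx a b
    simp only [Matrix.smul_apply, hx a b, smul_eq_mul]
    ring

/-- The 7-dimensional component `Λ²₇ = {α ⌟ φ : α ∈ ℝ⁷}`. -/
def Lam2_7 : Submodule ℝ (Matrix (Fin 7) (Fin 7) ℝ) where
  carrier := {ω | ∃ α : Fin 7 → ℝ, ∀ b c, ω b c = ∑ a : Fin 7, α a * phi a b c}
  add_mem' := by
    rintro x y ⟨α, hα⟩ ⟨β, hβ⟩
    refine ⟨α + β, fun b c => ?_⟩
    simp only [Matrix.add_apply, hα b c, hβ b c, Pi.add_apply, add_mul,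
      Finset.sum_add_distrib]
  zero_mem' := by
    refine ⟨0, fun b c => ?_⟩
    simp
  smul_mem' := by
    rintro r x ⟨α, hα⟩
    refine ⟨r • α, fun b c => ?_⟩
    simp only [Matrix.smul_apply, hα b c, Pi.smul_apply, smul_eq_mul, Finset.mul_sum]
    exact Finset.sum_congr rfl fun a _ => by ring

/-- The 14-dimensional component `Λ²₁₄ = {ω ∈ Λ² : ω_{ab} φ^{ab}{}_c = 0}`. -/
def Lam2_14 : Submodule ℝ (Matrix (Fin 7) (Fin 7) ℝ) where
  carrier := {ω | (∀ a b, ω b a = -ω a b) ∧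
    ∀ c : Fin 7, ∑ a : Fin 7, ∑ b : Fin 7, ω a b * phi a b c = 0}
  add_mem' := by
    rintro x y ⟨hx, hx'⟩ ⟨hy, hy'⟩
    refine ⟨fun a b => ?_, fun c => ?_⟩
    · simp only [Matrix.add_apply, hx a b, hy a b]; ring
    · simp only [Matrix.add_apply, add_mul, Finset.sum_add_distrib, hx' c, hy' c, add_zero]
  zero_mem' := by
    refine ⟨fun a b => by simp, fun c => by simp⟩
  smul_mem' := by
    rintro r x ⟨hx, hx'⟩
    refine ⟨fun a b => ?_, fun c => ?_⟩
    · simp only [Matrix.smul_apply, hx a b, smul_eq_mul]; ring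
    · have : ∑ a : Fin 7, ∑ b : Fin 7, (r • x) a b * phi a b c
          = r * ∑ a : Fin 7, ∑ b : Fin 7, x a b * phi a b c := by
        simp only [Matrix.smul_apply, smul_eq_mul, Finset.mul_sum]
        exact Finset.sum_congr rfl fun a _ => Finset.sum_congr rfl fun b _ => by ring
      rw [this, hx' c, mul_zero]

/-!
The seven index triples of `φ` are the lines of the Fano plane. Two points lie on a unique line,
so for `a ≠ d` every product `φ_{abc} φ_{dbc}` vanishes, and each point lies on three lines, so
`φ_{abc} φ_{dbc} = 6 δ_{ad}`. Hence `ω ↦ ω_{ab} φ_{abc} / 6` is a left inverse of `α ↦ α ⌟ φ`, so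
every space of 2-tensors containing all `α ⌟ φ` is the direct sum of the image of the latter and
the part of the kernel of the former that it contains. Antisymmetric matrices are determined by
their `21` entries above the diagonal, which leaves `21 - 7 = 14` dimensions for that part.
-/

open Module

section LeftInverse

variable {R V W : Type*} [Ring R] [AddCommGroup V] [Module R V] [AddCommGroup W] [Module R W]
  {f : V →ₗ[R] W} {g : W →ₗ[R] V} {U : Submodule R W}

theorem isCompl_range_ker_of_comp_eq_id (hgf : g ∘ₗ f = .id) : IsCompl f.range g.ker := by
  have idem : IsIdempotentElem (f ∘ₗ g) := by
    rw [IsIdempotentElem, Module.End.mul_eq_comp, LinearMap.comp_assoc,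
      ← LinearMap.comp_assoc g, hgf, LinearMap.id_comp]
  have range_g : g.range = ⊤ :=
    LinearMap.range_eq_top.mpr (LinearMap.surjective_of_comp_eq_id f g hgf)
  rw [← LinearMap.range_comp_of_range_eq_top f range_g,
    ← LinearMap.ker_comp_of_ker_eq_bot g (LinearMap.ker_eq_bot_of_inverse hgf)]
  exact LinearMap.IsIdempotentElem.isCompl idem

theorem range_inf_inf_ker_eq_bot (hgf : g ∘ₗ f = .id) : f.range ⊓ (U ⊓ g.ker) = ⊥ :=
  ((isCompl_range_ker_of_comp_eq_id hgf).disjoint.mono_right inf_le_right).eq_bot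

theorem range_sup_inf_ker_eq (hgf : g ∘ₗ f = .id) (hU : f.range ≤ U) :
    f.range ⊔ U ⊓ g.ker = U := by
  rw [inf_comm, ← sup_inf_assoc_of_le _ hU,
    (isCompl_range_ker_of_comp_eq_id hgf).sup_eq_top, top_inf_eq]

theorem existsUnique_eq_add_mem_inf_ker (hgf : g ∘ₗ f = .id) (hU : f.range ≤ U) {w : W}
    (hw : w ∈ U) : ∃! p : V × W, p.2 ∈ U ⊓ g.ker ∧ w = f p.1 + p.2 := by
  have hgf' (v : V) : g (f v) = v := LinearMap.congr_fun hgf v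
  refine ⟨(g w, w - f (g w)), ⟨⟨U.sub_mem hw (hU ⟨g w, rfl⟩), ?_⟩, by simp⟩, ?_⟩
  · simp [hgf']
  · rintro ⟨v, w'⟩ ⟨⟨-, hw'⟩, rfl⟩
    have hw' : g w' = 0 := hw'
    simp [hgf', hw']

end LeftInverse

theorem finrank_add_finrank_inf_ker {K V W : Type*} [DivisionRing K] [AddCommGroup V] [Module K V]
    [AddCommGroup W] [Module K W] {f : V →ₗ[K] W} {g : W →ₗ[K] V} {U : Submodule K W}
    [FiniteDimensional K U] (hgf : g ∘ₗ f = .id) (hU : f.range ≤ U) :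
    finrank K V + finrank K ↥(U ⊓ g.ker) = finrank K U := by
  have : FiniteDimensional K f.range := Submodule.finiteDimensional_of_le hU
  have h := Submodule.finrank_sup_add_finrank_inf_eq f.range (U ⊓ g.ker)
  rw [range_sup_inf_ker_eq hgf hU, range_inf_inf_ker_eq_bot hgf, finrank_bot, add_zero,
    LinearMap.finrank_range_of_inj (LinearMap.injective_of_comp_eq_id f g hgf)] at h
  exact h.symm

section Skew

variable {n R : Type*} [Fintype n] [CommRing R]

theorem mem_skewAdjointMatricesSubmodule_one [DecidableEq n] {ω : Matrix n n R} :
    ω ∈ skewAdjointMatricesSubmodule (1 : Matrix n n R) ↔ ∀ a b, ω b a = -ω a b := by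
  simp only [mem_skewAdjointMatricesSubmodule, Matrix.IsSkewAdjoint, Matrix.IsAdjointPair,
    mul_one, one_mul, ← Matrix.ext_iff, Matrix.transpose_apply, Matrix.neg_apply]

variable [LinearOrder n]

/-- Restriction of a skew-symmetric matrix to its strictly upper triangular entries. -/
def upperEntries :
    skewAdjointMatricesSubmodule (1 : Matrix n n R) →ₗ[R] ({p : n × n // p.1 < p.2} → R) where
  toFun ω p := ω.1 p.1.1 p.1.2
  map_add' _ _ := rfl
  map_smul' _ _ := rfl

theorem upperEntries_injective (h2 : IsLeftRegular (2 : R)) :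
    Function.Injective (upperEntries (n := n) (R := R)) := by
  rw [← LinearMap.ker_eq_bot, LinearMap.ker_eq_bot']
  rintro ⟨ω, hω⟩ h
  rw [mem_skewAdjointMatricesSubmodule_one] at hω
  have upper {a b : n} (hab : a < b) : ω a b = 0 := congrFun h ⟨(a, b), hab⟩
  ext a b
  rcases lt_trichotomy a b with hab | rfl | hba
  · exact upper hab
  · have two_mul_diag : 2 * ω a a = 2 * 0 := by linear_combination hω a a
    exact h2 two_mul_diag
  · simp [hω b a, upper hba]

theorem upperEntries_surjective :
    Function.Surjective (upperEntries (n := n) (R := R)) := by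
  intro u
  let ω : Matrix n n R := fun a b =>
    if hab : a < b then u ⟨(a, b), hab⟩ else if hba : b < a then -u ⟨(b, a), hba⟩ else 0
  have hω : ω ∈ skewAdjointMatricesSubmodule 1 := by
    refine mem_skewAdjointMatricesSubmodule_one.mpr fun a b => ?_
    rcases lt_trichotomy a b with hab | rfl | hba
    · simp [ω, hab, hab.not_gt]
    · simp [ω]
    · simp [ω, hba, hba.not_gt]
  exact ⟨⟨ω, hω⟩, funext fun p => dif_pos p.2⟩

theorem finrank_skewAdjointMatricesSubmodule_one [Nontrivial R] (h2 : IsLeftRegular (2 : R)) :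
    finrank R (skewAdjointMatricesSubmodule (1 : Matrix n n R)) = (Fintype.card n).choose 2 := by
  rw [(LinearEquiv.ofBijective upperEntries
      ⟨upperEntries_injective h2, upperEntries_surjective⟩).finrank_eq,
    finrank_fintype_fun_eq_card, Fintype.card_subtype, Fintype.card_product_filter_lt]

end Skew

section Contraction

variable {ι m n R : Type*} [Fintype m] [Fintype n] [CommRing R]

/-- The contraction `ω ↦ (ω_{bc} T_{abc})_a` against a tensor `T`, viewed as the family of matrices
`T a`. It is the Euclidean adjoint of `α ↦ α ⌟ T`, which is `Fintype.linearCombination R T`. -/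
def contraction (T : ι → Matrix m n R) : Matrix m n R →ₗ[R] (ι → R) where
  toFun ω a := ∑ b, ∑ c, ω b c * T a b c
  map_add' ω η := by ext; simp [add_mul, Finset.sum_add_distrib]
  map_smul' r ω := by ext; simp [Finset.mul_sum, mul_assoc]

theorem contraction_apply (T : ι → Matrix m n R) (ω : Matrix m n R) (a : ι) :
    contraction T ω a = ∑ b, ∑ c, ω b c * T a b c :=
  rfl

theorem contraction_comp_linearCombination [Fintype ι] [DecidableEq ι] {T : ι → Matrix m n R}
    {k : R} (hT : ∀ a d, ∑ b, ∑ c, T a b c * T d b c = if a = d then k else 0) :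
    contraction T ∘ₗ Fintype.linearCombination R T = k • .id := by
  ext a d
  simp [contraction_apply, hT, Pi.single_apply, eq_comm]

end Contraction

theorem phi_cyclic (a b c : Fin 7) : phi a b c = phi c a b := by
  unfold phi; ring

theorem phi_swap (a b c : Fin 7) : phi a c b = -phi a b c := by
  unfold phi; ring

-- With indices counted from 1, the seven index triples of `φ` are the lines of the Fano plane:
-- the triples of distinct elements of `{1, …, 7}` whose bitwise XOR is 0.
theorem phi0_eq_zero_of_xor_ne {a b c : ℕ} (h : (a + 1) ^^^ (b + 1) ^^^ (c + 1) ≠ 0) :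
    phi0 a b c = 0 := by
  unfold phi0
  split <;> simp_all

theorem phi_eq_zero_of_xor_ne {a b c : Fin 7}
    (h : (a.val + 1) ^^^ (b.val + 1) ^^^ (c.val + 1) ≠ 0) : phi a b c = 0 := by
  rw [phi]
  repeat rw [phi0_eq_zero_of_xor_ne]
  · norm_num
  all_goals simpa only [Nat.xor_comm, Nat.xor_left_comm] using h

theorem phi_mul_phi_eq_zero {a d : Fin 7} (had : a ≠ d) (b c : Fin 7) :
    phi a b c * phi d b c = 0 := by
  by_contra hne
  have ha : (a.val + 1) ^^^ (b.val + 1) ^^^ (c.val + 1) = 0 :=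
    not_imp_comm.mp phi_eq_zero_of_xor_ne (left_ne_zero_of_mul hne)
  have hd : (d.val + 1) ^^^ (b.val + 1) ^^^ (c.val + 1) = 0 :=
    not_imp_comm.mp phi_eq_zero_of_xor_ne (right_ne_zero_of_mul hne)
  rw [Nat.xor_assoc, Nat.xor_eq_zero_iff] at ha hd
  omega

theorem sum_phi_mul_self (a : Fin 7) : ∑ b, ∑ c, phi a b c * phi a b c = 6 := by
  fin_cases a <;> simp [Fin.sum_univ_seven, phi, phi0] <;> norm_num

theorem sum_phi_mul_phi (a d : Fin 7) :
    ∑ b, ∑ c, phi a b c * phi d b c = if a = d then 6 else 0 := by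
  split_ifs with had
  · exact had ▸ sum_phi_mul_self a
  · simp only [phi_mul_phi_eq_zero had, Finset.sum_const_zero]

/-- The map `α ↦ α ⌟ φ`. -/
noncomputable def interiorPhi : (Fin 7 → ℝ) →ₗ[ℝ] Matrix (Fin 7) (Fin 7) ℝ :=
  Fintype.linearCombination ℝ fun a => Matrix.of (phi a)

/-- The map sending a 2-tensor `ω` to the vector `α_c = ω_{ab} φ_{abc} / 6`, normalised so that
it recovers `α` from `α ⌟ φ`. -/
noncomputable def phiComponent : Matrix (Fin 7) (Fin 7) ℝ →ₗ[ℝ] (Fin 7 → ℝ) :=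
  (6 : ℝ)⁻¹ • contraction fun a => Matrix.of (phi a)

theorem interiorPhi_apply (α : Fin 7 → ℝ) (b c : Fin 7) :
    interiorPhi α b c = ∑ a, α a * phi a b c := by
  simp [interiorPhi, Fintype.linearCombination_apply, Matrix.sum_apply]

theorem phiComponent_comp_interiorPhi : phiComponent ∘ₗ interiorPhi = .id := by
  rw [phiComponent, interiorPhi, LinearMap.smul_comp,
    contraction_comp_linearCombination (T := fun a => Matrix.of (phi a)) sum_phi_mul_phi,
    inv_smul_smul₀ (by norm_num)]

theorem mem_ker_phiComponent {ω : Matrix (Fin 7) (Fin 7) ℝ} :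
    ω ∈ phiComponent.ker ↔ ∀ c, ∑ a, ∑ b, ω a b * phi a b c = 0 := by
  rw [phiComponent, LinearMap.ker_smul _ _ (by norm_num), LinearMap.mem_ker, funext_iff]
  refine forall_congr' fun c => ?_
  simp only [contraction_apply, Matrix.of_apply, Pi.zero_apply, ← phi_cyclic _ _ c]

theorem Lam2_eq_skewAdjointMatricesSubmodule : Lam2 = skewAdjointMatricesSubmodule 1 :=
  Submodule.ext fun _ => mem_skewAdjointMatricesSubmodule_one.symm

theorem Lam2_7_eq_range : Lam2_7 = interiorPhi.range := by
  ext ω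
  simp only [LinearMap.mem_range, ← Matrix.ext_iff, interiorPhi_apply]
  exact exists_congr fun α => forall₂_congr fun b c => eq_comm

theorem mem_Lam2_14 {ω : Matrix (Fin 7) (Fin 7) ℝ} :
    ω ∈ Lam2_14 ↔ (∀ a b, ω b a = -ω a b) ∧ ∀ c, ∑ a, ∑ b, ω a b * phi a b c = 0 :=
  Iff.rfl

theorem Lam2_14_eq_inf_ker : Lam2_14 = Lam2 ⊓ phiComponent.ker :=
  Submodule.ext fun _ => and_congr_right fun _ => mem_ker_phiComponent.symm

theorem range_interiorPhi_le_Lam2 : interiorPhi.range ≤ Lam2 := by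
  rw [interiorPhi, Fintype.range_linearCombination, Submodule.span_le]
  exact Set.range_subset_iff.mpr phi_swap

theorem finrank_Lam2 : finrank ℝ Lam2 = 21 := by
  rw [Lam2_eq_skewAdjointMatricesSubmodule]
  exact finrank_skewAdjointMatricesSubmodule_one (IsRegular.of_ne_zero two_ne_zero).left

theorem finrank_Lam2_7 : finrank ℝ Lam2_7 = 7 := by
  rw [Lam2_7_eq_range, LinearMap.finrank_range_of_inj
    (LinearMap.injective_of_comp_eq_id _ _ phiComponent_comp_interiorPhi), finrank_fin_fun]

theorem finrank_Lam2_14 : finrank ℝ Lam2_14 = 14 := by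
  have h := finrank_add_finrank_inf_ker phiComponent_comp_interiorPhi range_interiorPhi_le_Lam2
  rw [← Lam2_14_eq_inf_ker, finrank_Lam2, finrank_fin_fun] at h
  omega

/-- Every antisymmetric 2-tensor `ω` on `ℝ⁷` decomposes uniquely as
`ω_{bc} = α^a φ_{abc} + ω'_{bc}` with `ω' ∈ Λ²₁₄`; consequently
`Λ² = Λ²₇ ⊕ Λ²₁₄`, with `dim Λ²₇ = 7` and `dim Λ²₁₄ = 14`. -/
theorem lam2_decomposition :
    (∀ ω : Matrix (Fin 7) (Fin 7) ℝ, (∀ a b, ω b a = -ω a b) →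
      ∃! p : (Fin 7 → ℝ) × Matrix (Fin 7) (Fin 7) ℝ,
        (∀ a b, p.2 b a = -p.2 a b) ∧
        (∀ c : Fin 7, ∑ a : Fin 7, ∑ b : Fin 7, p.2 a b * phi a b c = 0) ∧
        (∀ b c, ω b c = (∑ a : Fin 7, p.1 a * phi a b c) + p.2 b c)) ∧
    Lam2_7 ⊔ Lam2_14 = Lam2 ∧ Lam2_7 ⊓ Lam2_14 = ⊥ ∧
    Module.finrank ℝ Lam2_7 = 7 ∧ Module.finrank ℝ Lam2_14 = 14 := by
  refine ⟨fun ω hω => ?_, ?_, ?_, finrank_Lam2_7, finrank_Lam2_14⟩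
  · have h := existsUnique_eq_add_mem_inf_ker phiComponent_comp_interiorPhi
      range_interiorPhi_le_Lam2 hω
    simpa only [← Lam2_14_eq_inf_ker, mem_Lam2_14, ← Matrix.ext_iff, Matrix.add_apply,
      interiorPhi_apply, and_assoc] using h
  · rw [Lam2_7_eq_range, Lam2_14_eq_inf_ker]
    exact range_sup_inf_ker_eq phiComponent_comp_interiorPhi range_interiorPhi_le_Lam2
  · rw [Lam2_7_eq_range, Lam2_14_eq_inf_ker]
    exact range_inf_inf_ker_eq_bot phiComponent_comp_interiorPhi
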